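/- For every closed term M of Λ⊕, the judgment M ⇓div,n (1 − Σ⟦M⟧n) holds: the probability 1 minus the total mass of the call-by-name small-step semantics of M is a derivable call-by-name divergence probability for M. -/

import Mathlib

open scoped ENNReal

/-- Terms of Λ⊕ (and of Λ⊕⁺), in de Bruijn notation: variables, abstractions,
applications and binary (probabilistic) sums.  De Bruijn indices realize
"terms up to renaming of bound variables". -/
inductive Term : Type
  | var : ℕ → Term
  | lam : Term → Term
  | app : Term → Term → Term
  | choice : Term → Term → Term
  deriving DecidableEq

namespace Term

/-- Values: variables and abstractions. -/
inductive IsValue : Term → Prop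
  | var (n : ℕ) : IsValue (var n)
  | lam (M : Term) : IsValue (lam M)

/-- Boolean value test. -/
def isVal : Term → Bool
  | var _ => true
  | lam _ => true
  | _ => false

/-- Shifting of de Bruijn indices: add `d` to all indices `≥ c`. -/
def shift (d c : ℕ) : Term → Term
  | var n => if n < c then var n else var (n + d)
  | lam M => lam (shift d (c + 1) M)
  | app M N => app (shift d c M) (shift d c N)
  | choice M N => choice (shift d c M) (shift d c N)

/-- Capture-avoiding substitution `M[j := N]` (the variable `j` is consumed and
higher indices are decremented, as in a β-step). -/
def subst : Term → ℕ → Term → Term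
  | var n, j, N => if n = j then shift j 0 N else if j < n then var (n - 1) else var n
  | lam M, j, N => lam (subst M (j + 1) N)
  | app M L, j, N => app (subst M j N) (subst L j N)
  | choice M L, j, N => choice (subst M j N) (subst L j N)

/-- All free indices are `< n`. -/
def closedUnder : Term → ℕ → Prop
  | var m, n => m < n
  | lam M, n => closedUnder M (n + 1)
  | app M N, n => closedUnder M n ∧ closedUnder N n
  | choice M N, n => closedUnder M n ∧ closedUnder N n

/-- Closed terms: no free variables. -/
def Closed (M : Term) : Prop := closedUnder M 0

end Term

/-- (Sub)distributions are represented as functions from terms into `ℝ≥0∞`;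
genuine distributions (`IsDist`) are supported on values and have mass `≤ 1`. -/
abbrev PDist := Term → ℝ≥0∞

/-- The sum (total mass) `Σ𝒟` of a distribution. -/
noncomputable def dsum (D : PDist) : ℝ≥0∞ := ∑' M, D M

/-- The support of a distribution. -/
def dsupp (D : PDist) : Set Term := {M | D M ≠ 0}

/-- The everywhere-zero distribution `∅`. -/
noncomputable def dzero : PDist := fun _ => 0

/-- The Dirac distribution `{V^1}`. -/
noncomputable def dirac (V : Term) : PDist := fun M => if M = V then 1 else 0

/-- Being a genuine (sub)probability distribution: supported on values, with
total mass at most one. -/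
def IsDist (D : PDist) : Prop := (∀ M, D M ≠ 0 → M.IsValue) ∧ dsum D ≤ 1

/-- Call-by-value reduction `↦v`, relating a term to the (equiprobable) finite
sequence of its possible reducts. -/
inductive RedV : Term → List Term → Prop
  | beta {M V : Term} : V.IsValue → RedV (.app (.lam M) V) [M.subst 0 V]
  | choice {V W : Term} : V.IsValue → W.IsValue → RedV (.choice V W) [V, W]
  | appL {M N : Term} {Ls : List Term} :
      RedV M Ls → RedV (.app M N) (Ls.map (fun L => .app L N))
  | appR {V M : Term} {Ns : List Term} :
      V.IsValue → RedV M Ns → RedV (.app V M) (Ns.map (fun L => .app V L))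
  | choiceL {M N : Term} {Ls : List Term} :
      RedV M Ls → RedV (.choice M N) (Ls.map (fun L => .choice L N))
  | choiceR {V M : Term} {Ns : List Term} :
      V.IsValue → RedV M Ns → RedV (.choice V M) (Ns.map (fun L => .choice V L))

/-- Call-by-name reduction `↦n`. -/
inductive RedN : Term → List Term → Prop
  | beta {M N : Term} : RedN (.app (.lam M) N) [M.subst 0 N]
  | choice {M N : Term} : RedN (.choice M N) [M, N]
  | appL {M N : Term} {Ls : List Term} :
      RedN M Ls → RedN (.app M N) (Ls.map (fun L => .app L N))

/-- The inductive small-step convergence relation `⇒`, parametric in the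
underlying reduction relation: any term evaluates to `∅`; a value `V`
evaluates to `{V^1}`; and if `M ↦ N₁,…,Nₙ` and `Nᵢ ⇒ 𝒟ᵢ` then
`M ⇒ Σᵢ (1/n)𝒟ᵢ`. -/
inductive Conv (Red : Term → List Term → Prop) : Term → PDist → Prop
  | bot (M : Term) : Conv Red M dzero
  | val {V : Term} : V.IsValue → Conv Red V (dirac V)
  | step {M : Term} {Ns : List Term} (Ds : Fin Ns.length → PDist) :
      Red M Ns → (∀ i, Conv Red (Ns.get i) (Ds i)) →
      Conv Red M (fun W => (∑ i, Ds i W) / (Ns.length : ℝ≥0∞))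

/-- Call-by-value small-step convergence `⇒v`. -/
def SmallV : Term → PDist → Prop := Conv RedV

/-- Call-by-name small-step convergence `⇒n`. -/
def SmallN : Term → PDist → Prop := Conv RedN

/-- The small-step semantics `⟦M⟧`: the pointwise supremum of all distributions
derivable for `M`. -/
noncomputable def semOf (S : Term → PDist → Prop) (M : Term) : PDist :=
  fun W => ⨆ (D : PDist) (_ : S M D), D W

/-- Call-by-value small-step semantics `⟦M⟧v`. -/
noncomputable def semV : Term → PDist := semOf SmallV

/-- Call-by-name small-step semantics `⟦M⟧n`. -/
noncomputable def semN : Term → PDist := semOf SmallN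

/-- One-step unfolding of the divergence inference system: a value diverges
with probability `0`; if `M ↦ N₁,…,Nₙ` and `Nᵢ` diverges with probability
`pᵢ`, then `M` diverges with probability `Σᵢ (1/n)pᵢ`. -/
def DivStep (Red : Term → List Term → Prop) (R : Term → ℝ≥0∞ → Prop)
    (M : Term) (p : ℝ≥0∞) : Prop :=
  (M.IsValue ∧ p = 0) ∨
    ∃ (Ns : List Term) (ps : Fin Ns.length → ℝ≥0∞),
      Red M Ns ∧ (∀ i, R (Ns.get i) (ps i)) ∧ p = (∑ i, ps i) / (Ns.length : ℝ≥0∞)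

/-- The coinductively-defined divergence relation `⇓div`: the union of all
consistent relations between terms and probabilities in `[0,1]`. -/
def Diverges (Red : Term → List Term → Prop) (M : Term) (p : ℝ≥0∞) : Prop :=
  ∃ R : Term → ℝ≥0∞ → Prop,
    (∀ N q, R N q → q ≤ 1 ∧ DivStep Red R N q) ∧ R M p

/-- Call-by-value divergence `⇓div`. -/
def DivV : Term → ℝ≥0∞ → Prop := Diverges RedV

/-- Call-by-name divergence `⇓div,n`. -/
def DivN : Term → ℝ≥0∞ → Prop := Diverges RedN

/-- One-step unfolding of the call-by-value big-step inference system. -/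
def BigVStep (R : Term → PDist → Prop) (M : Term) (D : PDist) : Prop :=
  (M.IsValue ∧ D = dirac M) ∨
  (∃ (N L : Term) (E F : PDist) (G : Term → Term → PDist),
      M = .app N L ∧ R N E ∧ R L F ∧
      (∀ P V, E (.lam P) ≠ 0 → V.IsValue → F V ≠ 0 → R (P.subst 0 V) (G P V)) ∧
      D = fun W => ∑' (P : Term), ∑' (V : Term), E (.lam P) * F V * G P V W) ∨
  (∃ (N L : Term) (E F : PDist),
      M = .choice N L ∧ R N E ∧ R L F ∧
      D = fun W => (E W * dsum F + F W * dsum E) / 2)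

/-- The coinductive call-by-value big-step relation `⇓v`: the union of all
consistent relations between terms and distributions. -/
def BigV (M : Term) (D : PDist) : Prop :=
  ∃ R : Term → PDist → Prop,
    (∀ N E, R N E → IsDist E ∧ BigVStep R N E) ∧ R M D

/-- One-step unfolding of the call-by-name big-step inference system. -/
def BigNStep (R : Term → PDist → Prop) (M : Term) (D : PDist) : Prop :=
  (M.IsValue ∧ D = dirac M) ∨
  (∃ (N L : Term) (E : PDist) (F : Term → PDist),
      M = .app N L ∧ R N E ∧
      (∀ P, E (.lam P) ≠ 0 → R (P.subst 0 L) (F P)) ∧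
      D = fun W => ∑' (P : Term), E (.lam P) * F P W) ∨
  (∃ (N L : Term) (E F : PDist),
      M = .choice N L ∧ R N E ∧ R L F ∧ D = fun W => (E W + F W) / 2)

/-- The coinductive call-by-name big-step relation `⇓n`. -/
def BigN (M : Term) (D : PDist) : Prop :=
  ∃ R : Term → PDist → Prop,
    (∀ N E, R N E → IsDist E ∧ BigNStep R N E) ∧ R M D

/-- Big-step semantics `⟪M⟫`: the pointwise infimum of all distributions
derivable for `M` in a big-step system. -/
noncomputable def bigSemOf (B : Term → PDist → Prop) (M : Term) : PDist :=
  fun W => ⨅ (D : PDist) (_ : B M D), D W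

/-!
Under a reduction strategy the distributions derivable for a fixed term form a directed family, so
the mass of the semantics is the supremum of the masses of these distributions, and hence is at most
`1`. This mass is `1` on values, and on a term reducing to `N₁, …, Nₙ` it is the average of the
masses for the `Nᵢ`. Its complement to `1` therefore satisfies the two rules of the divergence
system, so the graph of that complement, restricted to a set of terms which is closed under
reduction and contains no stuck term, is a consistent relation. Closed terms form such a set for
call-by-name reduction.
-/

section ENNReal

theorem sum_iSup_eq_iSup_pi_sum {ι : Type*} {κ : ι → Sort*} [∀ i, Nonempty (κ i)] (s : Finset ι)
    (f : ∀ i, κ i → ℝ≥0∞) :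
    ∑ i ∈ s, ⨆ k, f i k = ⨆ g : ∀ i, κ i, ∑ i ∈ s, f i (g i) := by
  classical
  refine le_antisymm ?_ (iSup_le fun g => Finset.sum_le_sum fun i _ => le_iSup (f i) (g i))
  induction s using Finset.induction_on with
  | empty => simp
  | insert a s ha ih =>
    rw [Finset.sum_insert ha]
    refine (add_le_add_right ih _).trans (ENNReal.iSup_add_iSup_le fun k g => ?_)
    have update_off_a : ∀ i ∈ s, f i (Function.update g a k i) = f i (g i) := fun i hi => by
      rw [Function.update_of_ne (ne_of_mem_of_not_mem hi ha)]
    refine le_iSup_of_le (Function.update g a k) ?_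
    rw [Finset.sum_insert ha, Function.update_self, Finset.sum_congr rfl update_off_a]

theorem tsum_iSup_eq_iSup_tsum_of_directed {α ι : Type*} {f : ι → α → ℝ≥0∞}
    (hf : Directed (· ≤ ·) f) : ∑' a, ⨆ i, f i a = ⨆ i, ∑' a, f i a := by
  have finset_sum_iSup (s : Finset α) : ∑ a ∈ s, ⨆ i, f i a = ⨆ i, ∑ a ∈ s, f i a :=
    ENNReal.finsetSum_iSup fun i j =>
      (hf i j).imp fun _ hk a => ⟨hk.1 a, hk.2 a⟩
  simp only [ENNReal.tsum_eq_iSup_sum, finset_sum_iSup]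
  exact iSup_comm

variable {ι : Type*} [Fintype ι] {p : ι → ℝ≥0∞}

theorem sum_div_card_le_one (hp : ∀ i, p i ≤ 1) : (∑ i, p i) / Fintype.card ι ≤ 1 :=
  ENNReal.div_le_of_le_mul <| by
    simpa using Finset.sum_le_card_nsmul Finset.univ p 1 fun i _ => hp i

theorem one_sub_sum_div_card [Nonempty ι] (hp : ∀ i, p i ≤ 1) :
    1 - (∑ i, p i) / Fintype.card ι = (∑ i, (1 - p i)) / Fintype.card ι := by
  have mean_ne_top := ne_top_of_le_ne_top ENNReal.one_ne_top (sum_div_card_le_one hp)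
  refine (ENNReal.eq_sub_of_add_eq mean_ne_top ?_).symm
  calc (∑ i, (1 - p i)) / Fintype.card ι + (∑ i, p i) / Fintype.card ι
      = (∑ i, (1 - p i + p i)) / Fintype.card ι := by
        rw [← ENNReal.add_div, Finset.sum_add_distrib]
    _ = (Fintype.card ι : ℝ≥0∞) / Fintype.card ι := by simp [tsub_add_cancel_of_le (hp _)]
    _ = 1 := ENNReal.div_self (by simp) (by simp)

end ENNReal

section TotalMass

theorem dsum_dzero : dsum dzero = 0 := tsum_zero

theorem dsum_dirac (V : Term) : dsum (dirac V) = 1 := tsum_ite_eq V _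

theorem dsum_sum_div {ι : Type*} [Fintype ι] (Ds : ι → PDist) (c : ℝ≥0∞) :
    dsum (fun W => (∑ i, Ds i W) / c) = (∑ i, dsum (Ds i)) / c := by
  simp only [dsum, div_eq_mul_inv, ENNReal.tsum_mul_right]
  rw [Summable.tsum_finsetSum fun _ _ => ENNReal.summable]

end TotalMass

/-- A reduction strategy: values do not reduce, and every other term reduces to at most one sequence
of reducts, which is nonempty. -/
structure IsStrategy (Red : Term → List Term → Prop) : Prop where
  not_isValue {M : Term} {Ns : List Term} : Red M Ns → ¬ M.IsValue
  unique {M : Term} {Ns Ns' : List Term} : Red M Ns → Red M Ns' → Ns = Ns'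
  ne_nil {M : Term} {Ns : List Term} : Red M Ns → Ns ≠ []

section Semantics

variable {Red : Term → List Term → Prop} {M : Term} {Ns : List Term}

theorem Conv.dsum_le_one {D : PDist} (hD : Conv Red M D) : dsum D ≤ 1 := by
  induction hD with
  | bot => exact dsum_dzero.trans_le zero_le_one
  | val => exact (dsum_dirac _).le
  | step _ _ _ ih =>
    rw [dsum_sum_div]
    simpa only [Fintype.card_fin] using sum_div_card_le_one ih

theorem IsStrategy.directedOn_conv (hRed : IsStrategy Red) (M : Term) :
    DirectedOn (· ≤ ·) {D | Conv Red M D} := by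
  intro D hD E hE
  induction hD generalizing E with
  | bot => exact ⟨E, hE, fun _ => zero_le, le_rfl⟩
  | val hV =>
    cases hE with
    | bot => exact ⟨_, .val hV, le_rfl, fun _ => zero_le⟩
    | val => exact ⟨_, .val hV, le_rfl, le_rfl⟩
    | step _ hr => exact absurd hV (hRed.not_isValue hr)
  | step Ds hr hDs ih =>
    cases hE with
    | bot => exact ⟨_, Conv.step Ds hr hDs, le_rfl, fun _ => zero_le⟩
    | val hV => exact absurd hV (hRed.not_isValue hr)
    | step Es hr' hEs =>
      obtain rfl := hRed.unique hr hr'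
      choose Fs hFs hDF hEF using fun i => ih i (Es i) (hEs i)
      exact ⟨_, Conv.step Fs hr hFs,
        fun W => ENNReal.div_le_div_right (Finset.sum_le_sum fun i _ => hDF i W) _,
        fun W => ENNReal.div_le_div_right (Finset.sum_le_sum fun i _ => hEF i W) _⟩

theorem semOf_apply (S : Term → PDist → Prop) (M W : Term) :
    semOf S M W = ⨆ D : {D // S M D}, D.1 W :=
  iSup_subtype'

theorem le_semOf {S : Term → PDist → Prop} {D : PDist} (hD : S M D) : D ≤ semOf S M :=
  fun _ => le_iSup₂_of_le D hD le_rfl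

theorem one_le_dsum_semOf_of_isValue (hM : M.IsValue) : 1 ≤ dsum (semOf (Conv Red) M) :=
  (dsum_dirac M).ge.trans (ENNReal.tsum_le_tsum (le_semOf (.val hM)))

theorem IsStrategy.dsum_semOf_le_one (hRed : IsStrategy Red) (M : Term) :
    dsum (semOf (Conv Red) M) ≤ 1 := by
  have directed : Directed (· ≤ ·) fun D : {D // Conv Red M D} => D.1 :=
    (hRed.directedOn_conv M).directed_val
  simp only [dsum, semOf_apply]
  rw [tsum_iSup_eq_iSup_tsum_of_directed directed]
  exact iSup_le fun D => D.2.dsum_le_one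

theorem sum_semOf_div_length_le (hr : Red M Ns) (W : Term) :
    (∑ i, semOf (Conv Red) (Ns.get i) W) / Ns.length ≤ semOf (Conv Red) M W := by
  have (N : Term) : Nonempty {D // Conv Red N D} := ⟨dzero, .bot N⟩
  simp only [semOf_apply _ (Ns.get _)]
  rw [sum_iSup_eq_iSup_pi_sum, ENNReal.iSup_div]
  exact iSup_le fun Ds => le_semOf (Conv.step (fun i => (Ds i).1) hr fun i => (Ds i).2) W

theorem IsStrategy.semOf_eq_of_red (hRed : IsStrategy Red) (hr : Red M Ns) :
    semOf (Conv Red) M = fun W => (∑ i, semOf (Conv Red) (Ns.get i) W) / Ns.length := by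
  refine funext fun W => le_antisymm (iSup₂_le fun D hD => ?_) (sum_semOf_div_length_le hr W)
  cases hD with
  | bot => exact zero_le
  | val hV => exact absurd hV (hRed.not_isValue hr)
  | step Ds hr' hDs =>
    obtain rfl := hRed.unique hr hr'
    exact ENNReal.div_le_div_right (Finset.sum_le_sum fun i _ => le_semOf (hDs i) W) _

theorem IsStrategy.one_sub_dsum_semOf_of_red (hRed : IsStrategy Red) (hr : Red M Ns) :
    1 - dsum (semOf (Conv Red) M) =
      (∑ i, (1 - dsum (semOf (Conv Red) (Ns.get i)))) / Ns.length := by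
  have : Nonempty (Fin Ns.length) :=
    Fin.pos_iff_nonempty.mp (List.length_pos_iff.mpr (hRed.ne_nil hr))
  rw [hRed.semOf_eq_of_red hr, dsum_sum_div]
  simpa only [Fintype.card_fin] using
    one_sub_sum_div_card fun i => hRed.dsum_semOf_le_one (Ns.get i)

theorem divN_one_sub_semN_general (hRed : IsStrategy Red) (S : Set Term)
    (progress : ∀ N ∈ S, N.IsValue ∨ ∃ Ns, Red N Ns)
    (preservation : ∀ N ∈ S, ∀ Ns, Red N Ns → ∀ L ∈ Ns, L ∈ S) (hM : M ∈ S) :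
    Diverges Red M (1 - dsum (semOf (Conv Red) M)) := by
  refine ⟨fun N q => N ∈ S ∧ q = 1 - dsum (semOf (Conv Red) N), ?_, hM, rfl⟩
  rintro N _ ⟨hN, rfl⟩
  refine ⟨tsub_le_self, ?_⟩
  rcases progress N hN with hV | ⟨Ns, hr⟩
  · exact .inl ⟨hV, tsub_eq_zero_of_le (one_le_dsum_semOf_of_isValue hV)⟩
  · exact .inr ⟨Ns, _, hr, fun i => ⟨preservation N hN Ns hr _ (Ns.get_mem i), rfl⟩,
      hRed.one_sub_dsum_semOf_of_red hr⟩

end Semantics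

section CallByName

namespace Term

theorem closedUnder_shift {M : Term} {n : ℕ} (d c : ℕ) (hM : M.closedUnder n) :
    (M.shift d c).closedUnder (n + d) := by
  induction M generalizing n c with
  | var k =>
    simp only [closedUnder] at hM
    simp only [shift]
    split_ifs <;> simp only [closedUnder] <;> omega
  | lam M ih => simpa only [shift, closedUnder, Nat.add_right_comm] using ih (c + 1) hM
  | app M N ihM ihN => exact ⟨ihM c hM.1, ihN c hM.2⟩
  | choice M N ihM ihN => exact ⟨ihM c hM.1, ihN c hM.2⟩

theorem closedUnder_subst {M N : Term} {n j : ℕ} (hM : M.closedUnder (n + j + 1))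
    (hN : N.closedUnder n) : (M.subst j N).closedUnder (n + j) := by
  induction M generalizing j with
  | var k =>
    simp only [closedUnder] at hM
    simp only [subst]
    split_ifs
    · exact closedUnder_shift j 0 hN
    all_goals simp only [closedUnder]; omega
  | lam M ih => exact ih (j := j + 1) hM
  | app M L ihM ihL => exact ⟨ihM hM.1, ihL hM.2⟩
  | choice M L ihM ihL => exact ⟨ihM hM.1, ihL hM.2⟩

end Term

namespace RedN

variable {M : Term} {Ns : List Term}

theorem closedUnder {n : ℕ} (hr : RedN M Ns) (hM : M.closedUnder n) :
    ∀ N ∈ Ns, N.closedUnder n := by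
  induction hr with
  | beta => exact List.forall_mem_singleton.mpr (Term.closedUnder_subst (j := 0) hM.1 hM.2)
  | choice => exact List.forall_mem_cons.mpr ⟨hM.1, List.forall_mem_singleton.mpr hM.2⟩
  | appL _ ih => exact List.forall_mem_map.mpr fun L hL => ⟨ih hM.1 L hL, hM.2⟩

theorem not_isValue (hr : RedN M Ns) : ¬ M.IsValue := by
  rintro (_ | _) <;> cases hr

theorem unique {Ns' : List Term} (hr : RedN M Ns) (hr' : RedN M Ns') : Ns = Ns' := by
  induction hr generalizing Ns' with
  | beta =>
    cases hr' with
    | beta => rfl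
    | appL h => exact absurd (.lam _) h.not_isValue
  | choice => cases hr'; rfl
  | appL h ih =>
    cases hr' with
    | beta => exact absurd (.lam _) h.not_isValue
    | appL h' => rw [ih h']

theorem ne_nil (hr : RedN M Ns) : Ns ≠ [] := by
  induction hr with
  | beta => exact List.cons_ne_nil _ _
  | choice => exact List.cons_ne_nil _ _
  | appL _ ih => exact mt List.map_eq_nil_iff.mp ih

theorem isStrategy : IsStrategy RedN := ⟨not_isValue, unique, ne_nil⟩

end RedN

theorem Term.Closed.isValue_or_redN {M : Term} (hM : M.Closed) :
    M.IsValue ∨ ∃ Ns, RedN M Ns := by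
  induction M with
  | var k => exact .inl (.var k)
  | lam P => exact .inl (.lam P)
  | choice M N => exact .inr ⟨_, .choice⟩
  | app M N ihM =>
    rcases ihM hM.1 with (k | P) | ⟨Ns, hr⟩
    · exact absurd hM.1 (Nat.not_lt_zero k)
    · exact .inr ⟨_, .beta⟩
    · exact .inr ⟨_, .appL hr⟩

end CallByName

/-- `1` minus the total mass of the call-by-name small-step
semantics of `M` is a derivable call-by-name divergence probability for `M`. -/
theorem divN_one_sub_semN (M : Term) (hM : M.Closed) :
    DivN M (1 - dsum (semN M)) :=
  divN_one_sub_semN_general RedN.isStrategy {N | N.Closed} (fun _ hN => hN.isValue_or_redN)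
    (fun _ hN _ hr => hr.closedUnder hN) hM
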